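/- (Abstract primal-dual gap identity.) Suppose u ∈ K satisfies I(u) ≤ I(v) for all v ∈ K, and set q := B u + g. Then for every v ∈ K and every admissible r ∈ Y, the primal-dual total error equals the primal-dual gap estimator: (I(v) − I(u)) + (D(q) − D(r)) = (1/2)‖(B v + g) − r‖². -/

import Mathlib

open scoped RealInnerProductSpace

/-! The minimality of `u` gives the Euler–Lagrange equation `⟪B u + g, B w⟫ = ℓ w` on `K`, i.e.
`q` is itself admissible (`euler_lagrange_of_isMin`). Testing it with `w = u` yields
`-‖q‖² + ⟪q, g⟫ = -ℓ u`, which cancels the terms in `u` and `q`; admissibility of `r` tested with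
`v` turns `ℓ v` into `⟪r, B v⟫`, and what remains is the expansion of `‖(B v + g) - r‖²`. -/

/-- First-order optimality condition: the quadratic `t ↦ I(u + t w) - I(u)` is nonnegative and
vanishes at `t = 0`, so its linear coefficient is zero. -/
lemma euler_lagrange_of_isMin
    {X Y : Type*} [NormedAddCommGroup X] [InnerProductSpace ℝ X]
    [NormedAddCommGroup Y] [InnerProductSpace ℝ Y]
    (B : X →L[ℝ] Y) (g : Y) (ℓ : X →L[ℝ] ℝ) (K : Submodule ℝ X)
    (u : X) (hu : u ∈ K)
    (hmin : ∀ v ∈ K, (1 / 2) * ‖B u + g‖ ^ 2 - ℓ u ≤ (1 / 2) * ‖B v + g‖ ^ 2 - ℓ v)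
    (w : X) (hw : w ∈ K) : ⟪B u + g, B w⟫ = ℓ w := by
  have key : ∀ t : ℝ, 0 ≤ t * (⟪B u + g, B w⟫ - ℓ w) + t ^ 2 / 2 * ‖B w‖ ^ 2 := by
    intro t
    have h := hmin (u + t • w) (K.add_mem hu (K.smul_mem t hw))
    have e : B (u + t • w) + g = (B u + g) + t • B w := by
      rw [map_add, map_smul]; abel
    rw [e, norm_add_sq_real (B u + g), inner_smul_right, norm_smul, mul_pow, Real.norm_eq_abs, sq_abs,
      map_add, map_smul, smul_eq_mul] at h
    linarith
  set a := ⟪B u + g, B w⟫ - ℓ w with ha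
  set b := ‖B w‖ ^ 2 with hb
  have hb0 : 0 ≤ b := by positivity
  -- A step slightly shorter than the exact minimiser `-a / b`, so that `b = 0` is covered as well.
  have h := key (-a / (b + 1))
  have e : -a / (b + 1) * a + (-a / (b + 1)) ^ 2 / 2 * b
      = -(a ^ 2 * (b + 2)) / (2 * (b + 1) ^ 2) := by
    field_simp
    ring
  rw [e, le_div_iff₀ (by positivity), zero_mul] at h
  have ha0 : a = 0 := by
    have : a ^ 2 = 0 := by nlinarith [sq_nonneg a, mul_nonneg (sq_nonneg a) hb0]
    exact pow_eq_zero_iff two_ne_zero |>.mp this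
  linarith

/-- abstract primal-dual gap identity. If `u ∈ K` minimizes
`I(v) = (1/2)‖Bv + g‖² - ℓ(v)` over `K` and `q := Bu + g`, then for every `v ∈ K` and
every admissible `r`, `(I(v) - I(u)) + (D(q) - D(r)) = (1/2)‖(Bv + g) - r‖²`. -/
theorem abstract_primal_dual_gap_identity
    {X Y : Type*} [NormedAddCommGroup X] [InnerProductSpace ℝ X]
    [NormedAddCommGroup Y] [InnerProductSpace ℝ Y]
    (B : X →L[ℝ] Y) (g : Y) (ℓ : X →L[ℝ] ℝ) (K : Submodule ℝ X)
    (u : X) (hu : u ∈ K)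
    (hmin : ∀ v ∈ K, (1 / 2) * ‖B u + g‖ ^ 2 - ℓ u ≤ (1 / 2) * ‖B v + g‖ ^ 2 - ℓ v)
    (q : Y) (hq : q = B u + g) :
    ∀ v ∈ K, ∀ r : Y, (∀ w ∈ K, ⟪r, B w⟫ = ℓ w) →
      (((1 / 2) * ‖B v + g‖ ^ 2 - ℓ v) - ((1 / 2) * ‖B u + g‖ ^ 2 - ℓ u)) +
        ((-(1 / 2) * ‖q‖ ^ 2 + ⟪q, g⟫) - (-(1 / 2) * ‖r‖ ^ 2 + ⟪r, g⟫)) =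
        (1 / 2) * ‖(B v + g) - r‖ ^ 2 := by
  intro v hv r hr
  have hEL := euler_lagrange_of_isMin B g ℓ K u hu hmin u hu
  have hqq : ‖B u + g‖ ^ 2 = ⟪B u + g, B u⟫ + ⟪B u + g, g⟫ := by
    rw [← real_inner_self_eq_norm_sq, ← inner_add_right]
  have hrv := hr v hv
  rw [hq, norm_sub_sq_real, real_inner_comm r (B v + g), inner_add_right]
  linarith
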